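/- arXiv:1805.11855 — 2 statements merged into one kernel-verified Lean document; each statement's English description precedes it below -/
import Mathlib

section
/- Let α > −1 and β < α + 1 be real numbers, and suppose ∫₀ˣ t^{−β} J_α(t) dt ≥ 0 for every x > 0. Then necessarily −α − 1 < β < α + 1 and β ≥ −1/2. -/
open Real

/-- The Bessel function of the first kind of real order `α`. -/
noncomputable def besselJ (α : ℝ) (t : ℝ) : ℝ :=
  ∑' k : ℕ, (-1 : ℝ) ^ k / ((k.factorial : ℝ) * Real.Gamma (α + k + 1)) *
    (t / 2) ^ (2 * (k : ℝ) + α)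


lemma osc_energy (μ : ℝ) (u v : ℝ → ℝ) (hu : ∀ t > 0, HasDerivAt u (v t) t)
    (hv : ∀ t > 0, HasDerivAt v ((μ / t ^ 2 - 1) * u t) t) :
    MonotoneOn (fun t => (u t ^ 2 + v t ^ 2) * exp (-(|μ| / t))) (Set.Ioi 0) ∧
    AntitoneOn (fun t => (u t ^ 2 + v t ^ 2) * exp (|μ| / t)) (Set.Ioi 0) := by
  have hE : ∀ t > 0, HasDerivAt (fun t => u t ^ 2 + v t ^ 2) (2 * (μ / t ^ 2) * (u t * v t)) t := by
    intro t ht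
    have := ((hu t ht).pow 2).add ((hv t ht).pow 2)
    refine HasDerivAt.congr_deriv this ?_
    push_cast
    ring
  have hd : ∀ t : ℝ, t > 0 → HasDerivAt (fun t => |μ| / t) (-(|μ| / t ^ 2)) t := by
    intro t ht
    have := (hasDerivAt_inv ht.ne').const_mul |μ|
    refine HasDerivAt.congr_deriv this ?_
    field_simp
  have key : ∀ t : ℝ, t > 0 → |2 * (μ / t ^ 2) * (u t * v t)| ≤ |μ| / t ^ 2 * (u t ^ 2 + v t ^ 2) := by
    intro t ht
    have h1 : |2 * (μ / t ^ 2) * (u t * v t)| = |μ| / t ^ 2 * (2 * |u t| * |v t|) := by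
      rw [abs_mul, abs_mul, abs_mul, abs_div, abs_of_pos (by positivity : (0:ℝ) < t ^ 2)]
      rw [abs_of_pos (by norm_num : (0:ℝ) < 2)]; ring
    rw [h1]
    gcongr
    nlinarith [sq_nonneg (|u t| - |v t|), sq_abs (u t), sq_abs (v t)]
  have d1 : ∀ t > 0, HasDerivAt (fun t => (u t ^ 2 + v t ^ 2) * exp (-(|μ| / t))) _ t :=
    fun t ht => (hE t ht).mul (HasDerivAt.exp (f := fun t => -(|μ| / t)) (hd t ht).neg)
  have d2 : ∀ t > 0, HasDerivAt (fun t => (u t ^ 2 + v t ^ 2) * exp (|μ| / t)) _ t :=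
    fun t ht => (hE t ht).mul ((hd t ht).exp)
  constructor
  · apply monotoneOn_of_deriv_nonneg (convex_Ioi 0)
    · exact fun t ht => (d1 t ht).continuousAt.continuousWithinAt
    · rw [interior_Ioi]; exact fun t ht => (d1 t ht).differentiableAt.differentiableWithinAt
    · rw [interior_Ioi]; intro t ht
      rw [(d1 t ht).deriv]
      have := (abs_le.1 (key t ht)).1
      have e := exp_pos (-(|μ| / t))
      nlinarith
  · apply antitoneOn_of_deriv_nonpos (convex_Ioi 0)
    · exact fun t ht => (d2 t ht).continuousAt.continuousWithinAt
    · rw [interior_Ioi]; exact fun t ht => (d2 t ht).differentiableAt.differentiableWithinAt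
    · rw [interior_Ioi]; intro t ht
      rw [(d2 t ht).deriv]
      have := (abs_le.1 (key t ht)).2
      have e := exp_pos (|μ| / t)
      nlinarith

lemma osc_bdd (μ : ℝ) (u v : ℝ → ℝ) (hu : ∀ t > 0, HasDerivAt u (v t) t)
    (hv : ∀ t > 0, HasDerivAt v ((μ / t ^ 2 - 1) * u t) t) :
    ∃ M > 0, ∀ t ≥ 1, |u t| ≤ M ∧ |v t| ≤ M := by
  have h := (osc_energy μ u v hu hv).2
  refine ⟨(u 1 ^ 2 + v 1 ^ 2) * exp |μ| + 1, by positivity, fun t ht => ?_⟩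
  have h1 := h (Set.mem_Ioi.2 one_pos) (Set.mem_Ioi.2 (by linarith : (0:ℝ) < t)) ht
  simp only [div_one] at h1
  have h2 : u t ^ 2 + v t ^ 2 ≤ (u t ^ 2 + v t ^ 2) * exp (|μ| / t) :=
    le_mul_of_one_le_right (by positivity) (one_le_exp (by positivity))
  constructor
  · nlinarith [sq_nonneg (|u t| - 1), sq_abs (u t), sq_nonneg (v t), abs_nonneg (u t), sq_nonneg (|u t|)]
  · nlinarith [sq_nonneg (|v t| - 1), sq_abs (v t), sq_nonneg (u t), abs_nonneg (v t), sq_nonneg (|v t|)]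

lemma trig_pick (a b T : ℝ) : ∃ t, T ≤ t ∧ t ≤ T + 2 * π ∧ a * cos t + b * sin t = √(a ^ 2 + b ^ 2) := by
  obtain ⟨n, hn, -⟩ := existsUnique_add_zsmul_mem_Ico two_pi_pos (Complex.arg ⟨a, b⟩) T
  refine ⟨_, hn.1, hn.2.le, ?_⟩
  have ha := Complex.norm_mul_cos_arg ⟨a, b⟩
  have hb := Complex.norm_mul_sin_arg ⟨a, b⟩
  have hr : ‖(⟨a, b⟩ : ℂ)‖ = √(a ^ 2 + b ^ 2) := by
    rw [Complex.norm_def, Complex.normSq_mk]; ring_nf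
  rw [hr] at ha hb
  simp only [zsmul_eq_mul, cos_add_int_mul_two_pi, sin_add_int_mul_two_pi]
  simp only at ha hb
  set θ := Complex.arg ⟨a, b⟩
  linear_combination √(a ^ 2 + b ^ 2) * sin_sq_add_cos_sq θ - cos θ * ha - sin θ * hb

lemma osc_main (μ : ℝ) (u v : ℝ → ℝ) (hu : ∀ t > 0, HasDerivAt u (v t) t)
    (hv : ∀ t > 0, HasDerivAt v ((μ / t ^ 2 - 1) * u t) t) (t0 : ℝ) (ht0 : 0 < t0)
    (h0 : u t0 ≠ 0) (p q : ℝ) (hpq : p ^ 2 + q ^ 2 = 1) :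
    ∃ c > 0, ∀ T, ∃ t ≥ T, c ≤ p * u t + q * v t := by
  obtain ⟨M, hM0, hM⟩ := osc_bdd μ u v hu hv
  have hlow := (osc_energy μ u v hu hv).1
  set e0 := (u t0 ^ 2 + v t0 ^ 2) * exp (-(|μ| / t0)) with he0
  have he0p : 0 < e0 := by positivity
  have hE : ∀ t ≥ t0, e0 ≤ u t ^ 2 + v t ^ 2 := by
    intro t ht
    have h1 := hlow (Set.mem_Ioi.2 ht0) (Set.mem_Ioi.2 (by linarith : (0:ℝ) < t)) ht
    simp only at h1
    refine h1.trans (mul_le_of_le_one_right (by positivity) (exp_le_one_iff.2 ?_))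
    have : 0 ≤ |μ| / t := div_nonneg (abs_nonneg _) (by linarith)
    linarith
  have hs : 0 < √e0 := sqrt_pos.2 he0p
  refine ⟨√e0 / 2, by positivity, fun T => ?_⟩
  set K := 2 * (|μ| * M) * (2 * π) with hK
  have hK0 : 0 ≤ K := by positivity
  obtain ⟨S, hS1, hSt, hST, hSK⟩ : ∃ S : ℝ, 1 ≤ S ∧ t0 ≤ S ∧ T ≤ S ∧ K / S ≤ √e0 / 4 := by
    refine ⟨max (max 1 t0) (max T (4 * K / √e0)), ?_, ?_, ?_, ?_⟩
    · exact (le_max_left _ _).trans (le_max_left _ _)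
    · exact (le_max_right _ _).trans (le_max_left _ _)
    · exact (le_max_left _ _).trans (le_max_right _ _)
    · have h1 : (1:ℝ) ≤ max (max 1 t0) (max T (4 * K / √e0)) := (le_max_left _ _).trans (le_max_left _ _)
      have h2 : 4 * K / √e0 ≤ max (max 1 t0) (max T (4 * K / √e0)) := (le_max_right _ _).trans (le_max_right _ _)
      rw [div_le_iff₀ (by linarith)]
      rw [div_le_iff₀ hs] at h2
      linarith
  have hS0 : 0 < S := by linarith
  have hp1 : |p| ≤ 1 := abs_le_one_iff_mul_self_le_one.2 (by nlinarith)
  have hq1 : |q| ≤ 1 := abs_le_one_iff_mul_self_le_one.2 (by nlinarith)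
  -- general bound
  have gen : ∀ P Q : ℝ, |P| ≤ 1 → |Q| ≤ 1 → ∀ t, S ≤ t → t ≤ S + 2 * π →
      |(P * (u t * cos t - v t * sin t) + Q * (u t * sin t + v t * cos t)) -
        (P * (u S * cos S - v S * sin S) + Q * (u S * sin S + v S * cos S))| ≤ √e0 / 4 := by
    intro P Q hP hQ t ht ht2
    have hder : ∀ x ∈ Set.Icc S t, HasDerivWithinAt
        (fun t => P * (u t * cos t - v t * sin t) + Q * (u t * sin t + v t * cos t))
        (μ / x ^ 2 * u x * (Q * cos x - P * sin x)) (Set.Icc S t) x := by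
      intro x hx
      have hx0 : 0 < x := by linarith [hx.1]
      have := (((((hu x hx0).mul (hasDerivAt_cos x)).sub ((hv x hx0).mul (hasDerivAt_sin x))).const_mul P).add
        ((((hu x hx0).mul (hasDerivAt_sin x)).add ((hv x hx0).mul (hasDerivAt_cos x))).const_mul Q)).hasDerivWithinAt (s := Set.Icc S t)
      refine HasDerivWithinAt.congr_deriv this ?_
      ring
    have hb : ∀ x ∈ Set.Icc S t, ‖μ / x ^ 2 * u x * (Q * cos x - P * sin x)‖ ≤ |μ| / S * M * 2 := by
      intro x hx
      have hx1 : 1 ≤ x := by linarith [hx.1]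
      rw [norm_mul, norm_mul, norm_div]
      simp only [Real.norm_eq_abs]
      rw [abs_of_pos (by positivity : 0 < x ^ 2)]
      have h3 : |Q * cos x - P * sin x| ≤ 2 := by
        have a1 : |Q * cos x| ≤ 1 := by
          rw [abs_mul]; exact mul_le_one₀ hQ (abs_nonneg _) (abs_cos_le_one x)
        have a2 : |P * sin x| ≤ 1 := by
          rw [abs_mul]; exact mul_le_one₀ hP (abs_nonneg _) (abs_sin_le_one x)
        exact (abs_sub _ _).trans (by linarith)
      have h4 := (hM x hx1).1
      have h5 : S ≤ x ^ 2 := by nlinarith [hx.1]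
      gcongr
    have := (convex_Icc S t).norm_image_sub_le_of_norm_hasDerivWithin_le hder hb
      (Set.left_mem_Icc.2 ht) (Set.right_mem_Icc.2 ht)
    rw [Real.norm_eq_abs, Real.norm_eq_abs, abs_of_nonneg (by linarith : 0 ≤ t - S)] at this
    refine this.trans (le_trans ?_ hSK)
    have h6 : |μ| / S * M * 2 * (t - S) ≤ |μ| / S * M * 2 * (2 * π) := by
      gcongr; linarith
    refine h6.trans (le_of_eq ?_)
    rw [hK]; field_simp
  obtain ⟨t, ht1, ht2, ht3⟩ := trig_pick
    (p * (u S * cos S - v S * sin S) + q * (u S * sin S + v S * cos S))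
    ((-q) * (u S * cos S - v S * sin S) + p * (u S * sin S + v S * cos S)) S
  refine ⟨t, by linarith, ?_⟩
  have g1 := gen p q hp1 hq1 t ht1 ht2
  have g2 := gen (-q) p (by rwa [abs_neg]) hp1 t ht1 ht2
  set a0 := (p * (u S * cos S - v S * sin S) + q * (u S * sin S + v S * cos S)) with ha0
  set b0 := ((-q) * (u S * cos S - v S * sin S) + p * (u S * sin S + v S * cos S)) with hb0
  set a := (p * (u t * cos t - v t * sin t) + q * (u t * sin t + v t * cos t)) with ha
  set b := ((-q) * (u t * cos t - v t * sin t) + p * (u t * sin t + v t * cos t)) with hb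
  have hval : p * u t + q * v t = a * cos t + b * sin t := by
    rw [ha, hb]
    linear_combination (-(p * u t + q * v t)) * sin_sq_add_cos_sq t
  have hsq : a0 ^ 2 + b0 ^ 2 = u S ^ 2 + v S ^ 2 := by
    have : a0 ^ 2 + b0 ^ 2 = (p ^ 2 + q ^ 2) * ((u S ^ 2 + v S ^ 2) * (sin S ^ 2 + cos S ^ 2)) := by
      rw [ha0, hb0]; ring
    rw [this, hpq, sin_sq_add_cos_sq]; ring
  have hge : √e0 ≤ √(a0 ^ 2 + b0 ^ 2) := sqrt_le_sqrt (by rw [hsq]; exact hE S hSt)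
  have f1 : |(a - a0) * cos t| ≤ √e0 / 4 := by
    rw [abs_mul]
    exact (mul_le_of_le_one_right (abs_nonneg _) (abs_cos_le_one t)).trans g1
  have f2 : |(b - b0) * sin t| ≤ √e0 / 4 := by
    rw [abs_mul]
    exact (mul_le_of_le_one_right (abs_nonneg _) (abs_sin_le_one t)).trans g2
  have f1' := (abs_le.1 f1).1
  have f2' := (abs_le.1 f2).1
  rw [hval]
  linarith

noncomputable def jc (ν : ℝ) (k : ℕ) : ℝ := (-1 : ℝ) ^ k / ((k.factorial : ℝ) * Real.Gamma (ν + k + 1))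
noncomputable def jj (ν s : ℝ) : ℝ := ∑' k : ℕ, jc ν k * s ^ k

lemma jc_bound (ν : ℝ) (hν : -1 < ν) : ∃ C > 0, ∀ k, |jc ν k| ≤ C / (k.factorial : ℝ) := by
  have hG : 0 < Gamma (ν + 1) := Gamma_pos_of_pos (by linarith)
  set m := min (Gamma (ν + 1)) (Gamma (ν + 1 + 1)) with hm
  have hm0 : 0 < m := lt_min hG (Gamma_pos_of_pos (by linarith))
  have h1 : ∀ k : ℕ, m ≤ Gamma (ν + (k + 1 : ℕ) + 1) := by
    intro k
    induction k with
    | zero => simp [hm]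
    | succ k ih =>
      have : Gamma (ν + (k + 1 + 1 : ℕ) + 1) = (ν + (k + 1 : ℕ) + 1) * Gamma (ν + (k + 1 : ℕ) + 1) := by
        rw [← Gamma_add_one]
        · push_cast; ring_nf
        · push_cast; have : (0:ℝ) ≤ k := k.cast_nonneg
          linarith
      rw [this]
      refine ih.trans (le_mul_of_one_le_left (hm0.le.trans ih) ?_)
      push_cast; have : (0:ℝ) ≤ k := k.cast_nonneg
      linarith
  have h2 : ∀ k : ℕ, m ≤ Gamma (ν + k + 1) := by
    intro k
    cases k with
    | zero => simp [hm]
    | succ k => exact h1 k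
  refine ⟨1 / m, by positivity, fun k => ?_⟩
  have := h2 k
  have hf : (0:ℝ) < k.factorial := by positivity
  rw [jc, abs_div, abs_pow, abs_neg, abs_one, one_pow, abs_of_pos (mul_pos hf (hm0.trans_le this)), div_div]
  rw [mul_comm]
  gcongr

lemma jj_summable (ν : ℝ) (hν : -1 < ν) (s : ℝ) : Summable (fun k => jc ν k * s ^ k) := by
  obtain ⟨C, hC, h⟩ := jc_bound ν hν
  refine Summable.of_norm_bounded (g := fun k : ℕ => C * (|s| ^ k / (k.factorial : ℝ)))
    ((Real.summable_pow_div_factorial _).mul_left C) (fun k => ?_)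
  rw [norm_mul, norm_pow, Real.norm_eq_abs, Real.norm_eq_abs]
  calc _ ≤ C / (k.factorial : ℝ) * |s| ^ k := by gcongr; exact h k
    _ = _ := by ring

lemma jc_succ (ν : ℝ) (k : ℕ) : jc ν (k + 1) * ((k + 1 : ℕ) : ℝ) = - jc (ν + 1) k := by
  have e : ν + ((k + 1 : ℕ) : ℝ) + 1 = ν + 1 + k + 1 := by push_cast; ring
  have hk : (k.factorial : ℝ) ≠ 0 := by positivity
  have hk1 : ((k + 1 : ℕ) : ℝ) ≠ 0 := by positivity
  rw [jc, jc, e, Nat.factorial_succ, Nat.cast_mul, pow_succ]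
  by_cases hG : Gamma (ν + 1 + k + 1) = 0
  · simp [hG]
  · field_simp

lemma jj_deriv (ν : ℝ) (hν : -1 < ν) (s : ℝ) : HasDerivAt (jj ν) (- jj (ν + 1) s) s := by
  obtain ⟨C, hC, h⟩ := jc_bound ν hν
  set R := |s| + 1 with hR
  have hR0 : 0 ≤ R := by positivity
  have hg : ∀ (k : ℕ) (y : ℝ), y ∈ Metric.ball (0:ℝ) R →
      HasDerivAt (fun s => jc ν k * s ^ k) (jc ν k * (k * y ^ (k - 1))) y := by
    intro k y _
    exact (hasDerivAt_pow k y).const_mul _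
  have hsum : Summable (fun k : ℕ => C / (k.factorial : ℝ) * (k * R ^ (k - 1))) := by
    rw [← summable_nat_add_iff 1]
    refine ((Real.summable_pow_div_factorial R).mul_left C).congr (fun k => ?_)
    rw [Nat.factorial_succ]
    push_cast
    have hk : (k.factorial : ℝ) ≠ 0 := by positivity
    have hk1 : ((k:ℝ) + 1) ≠ 0 := by positivity
    field_simp
  have hb : ∀ (k : ℕ) (y : ℝ), y ∈ Metric.ball (0:ℝ) R →
      ‖jc ν k * (k * y ^ (k - 1))‖ ≤ C / (k.factorial : ℝ) * (k * R ^ (k - 1)) := by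
    intro k y hy
    rw [norm_mul, norm_mul, norm_pow, Real.norm_eq_abs, Real.norm_natCast]
    have : ‖y‖ ≤ R := by simpa using (Metric.mem_ball.1 hy).le
    gcongr
    exact h k
  have := hasDerivAt_tsum_of_isPreconnected hsum Metric.isOpen_ball
    (convex_ball (0:ℝ) R).isPreconnected hg hb (Metric.mem_ball_self (by positivity))
    (jj_summable ν hν 0) (y := s) (by simp [hR])
  have e : (∑' k : ℕ, jc ν k * (k * s ^ (k - 1))) = - jj (ν + 1) s := by
    have hs : Summable (fun k : ℕ => jc ν k * (k * s ^ (k - 1))) :=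
      Summable.of_norm_bounded hsum (fun k => hb k s (by simp [hR]))
    rw [hs.tsum_eq_zero_add, jj, ← tsum_neg]
    simp only [Nat.cast_zero, zero_mul, mul_zero, zero_add, Nat.add_sub_cancel]
    refine tsum_congr (fun k => ?_)
    rw [← mul_assoc, jc_succ]; ring
  rw [e] at this
  exact this

lemma jj_rec (ν : ℝ) (hν : -1 < ν) (s : ℝ) :
    s * jj (ν + 2) s = (ν + 1) * jj (ν + 1) s - jj ν s := by
  have s1 := jj_summable (ν + 1) (by linarith) s
  have s0 := jj_summable ν hν s
  have s2 := jj_summable (ν + 2) (by linarith) s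
  have key : ∀ k : ℕ, (ν + 1) * jc (ν + 1) k - jc ν k = - (k : ℝ) * jc (ν + 1) k := by
    intro k
    have hp : 0 < ν + k + 1 := by have : (0:ℝ) ≤ k := k.cast_nonneg
                                  linarith
    have e : ν + 1 + k + 1 = (ν + k + 1) + 1 := by ring
    have hk : (k.factorial : ℝ) ≠ 0 := by positivity
    have hG := (Gamma_pos_of_pos hp).ne'
    rw [jc, jc, e, Gamma_add_one hp.ne']
    have := hp.ne'
    field_simp
    ring
  have hS : Summable (fun k : ℕ => (ν + 1) * (jc (ν + 1) k * s ^ k) - jc ν k * s ^ k) :=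
    (s1.mul_left _).sub s0
  rw [jj, jj, jj, ← tsum_mul_left, ← tsum_mul_left, ← (s1.mul_left _).tsum_sub s0, hS.tsum_eq_zero_add]
  have z : (ν + 1) * (jc (ν + 1) 0 * s ^ 0) - jc ν 0 * s ^ 0 = 0 := by
    have := key 0
    simp only [Nat.cast_zero, neg_zero, zero_mul] at this
    simp only [pow_zero, mul_one]; exact this
  rw [z, zero_add]
  refine tsum_congr (fun k => ?_)
  have k1 := key (k + 1)
  have k2 := jc_succ (ν + 1) k
  rw [show ν + 1 + 1 = ν + 2 by ring] at k2
  rw [pow_succ]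
  linear_combination (-(s ^ k * s)) * k1 + (s ^ k * s) * k2

lemma jj_zero (ν : ℝ) : jj ν 0 = 1 / Gamma (ν + 1) := by
  rw [jj, tsum_eq_single 0]
  · simp [jc]
  · intro k hk; simp [hk]

/-- argument composition -/
lemma jq_deriv (ν : ℝ) (hν : -1 < ν) (t : ℝ) :
    HasDerivAt (fun t => jj ν (t ^ 2 / 4)) (-(t / 2) * jj (ν + 1) (t ^ 2 / 4)) t := by
  have h1 : HasDerivAt (fun t : ℝ => t ^ 2 / 4) (t / 2) t := by
    have := (hasDerivAt_pow 2 t).div_const 4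
    refine HasDerivAt.congr_deriv this ?_
    push_cast; ring
  have := (jj_deriv ν hν (t ^ 2 / 4)).comp t h1
  refine HasDerivAt.congr_deriv this ?_
  ring

lemma pow_jq_deriv (ν r : ℝ) (hν : -1 < ν) (t : ℝ) (ht : 0 < t) :
    HasDerivAt (fun t => t ^ r * jj ν (t ^ 2 / 4))
      (r * t ^ (r - 1) * jj ν (t ^ 2 / 4) - t ^ (r + 1) / 2 * jj (ν + 1) (t ^ 2 / 4)) t := by
  have := (hasDerivAt_rpow_const (p := r) (Or.inl ht.ne')).mul (jq_deriv ν hν t)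
  refine HasDerivAt.congr_deriv this ?_
  rw [rpow_add_one ht.ne']
  ring

lemma jq_cont (ν : ℝ) (hν : -1 < ν) : Continuous (fun t => jj ν (t ^ 2 / 4)) :=
  continuous_iff_continuousAt.2 (fun t => (jq_deriv ν hν t).continuousAt)

/-- normalised u and derivative -/
noncomputable def uu (ν t : ℝ) : ℝ := t ^ (ν + 1 / 2) * jj ν (t ^ 2 / 4)
noncomputable def vv (ν t : ℝ) : ℝ :=
  (ν + 1 / 2) * (t ^ (ν - 1 / 2) * jj ν (t ^ 2 / 4)) - 1 / 2 * (t ^ (ν + 3 / 2) * jj (ν + 1) (t ^ 2 / 4))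

lemma uu_deriv (ν : ℝ) (hν : -1 < ν) (t : ℝ) (ht : 0 < t) : HasDerivAt (uu ν) (vv ν t) t := by
  have := pow_jq_deriv ν (ν + 1 / 2) hν t ht
  refine HasDerivAt.congr_deriv this ?_
  rw [vv, show ν + 1 / 2 - 1 = ν - 1 / 2 by ring, show ν + 1 / 2 + 1 = ν + 3 / 2 by ring]
  ring

lemma vv_deriv (ν : ℝ) (hν : -1 < ν) (t : ℝ) (ht : 0 < t) :
    HasDerivAt (vv ν) (((ν ^ 2 - 1 / 4) / t ^ 2 - 1) * uu ν t) t := by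
  have h := ((pow_jq_deriv ν (ν - 1 / 2) hν t ht).const_mul (ν + 1 / 2)).sub
    ((pow_jq_deriv (ν + 1) (ν + 3 / 2) (by linarith) t ht).const_mul (1 / 2))
  refine HasDerivAt.congr_deriv h ?_
  have r := jj_rec ν hν (t ^ 2 / 4)
  have e1 : t ^ (ν + 1 / 2) = t ^ (ν - 1 / 2 - 1) * t ^ 2 := by
    rw [← rpow_natCast, ← rpow_add ht]; congr 1; push_cast; ring
  have e2 : t ^ (ν - 1 / 2 + 1) = t ^ (ν - 1 / 2 - 1) * t ^ 2 := by
    rw [← rpow_natCast, ← rpow_add ht]; congr 1; push_cast; ring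
  have e3 : t ^ (ν + 3 / 2 - 1) = t ^ (ν - 1 / 2 - 1) * t ^ 2 := by
    rw [← rpow_natCast, ← rpow_add ht]; congr 1; push_cast; ring
  have e4 : t ^ (ν + 3 / 2 + 1) = t ^ (ν - 1 / 2 - 1) * t ^ 4 := by
    rw [← rpow_natCast, ← rpow_add ht]; congr 1; push_cast; ring
  rw [uu, e1, e2, e3, e4, show ν + 1 + 1 = ν + 2 by ring]
  field_simp
  linear_combination (16 * t ^ 2) * r

lemma uu_ne (ν : ℝ) (hν : -1 < ν) : ∃ t0 > 0, uu ν t0 ≠ 0 := by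
  have hc := (jq_cont ν hν).continuousAt (x := 0)
  have h0 : jj ν ((0:ℝ) ^ 2 / 4) ≠ 0 := by
    norm_num [jj_zero]
    exact (Gamma_pos_of_pos (by linarith)).ne'
  have h1 := hc.eventually_ne h0
  have h2 : ∀ᶠ t in nhdsWithin (0:ℝ) (Set.Ioi 0), jj ν (t ^ 2 / 4) ≠ 0 := h1.filter_mono nhdsWithin_le_nhds
  obtain ⟨t, ht, ht2⟩ := (h2.and self_mem_nhdsWithin).exists
  exact ⟨t, ht2, mul_ne_zero (rpow_pos_of_pos ht2 _).ne' ht⟩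

lemma besselJ_eq (α t : ℝ) (ht : 0 < t) :
    besselJ α t = 2 ^ (-α) * (t ^ α * jj α (t ^ 2 / 4)) := by
  rw [besselJ, jj, ← mul_assoc, ← tsum_mul_left]
  refine tsum_congr (fun k => ?_)
  have h2 : (0:ℝ) < t / 2 := by positivity
  have e : (t / 2) ^ (2 * (k : ℝ) + α) = (t ^ 2 / 4) ^ k * (2 ^ (-α) * t ^ α) := by
    rw [rpow_add h2, rpow_mul h2.le, rpow_natCast, div_rpow ht.le (by norm_num) α,
      rpow_neg (by norm_num)]
    have : (t / 2) ^ (2:ℝ) = t ^ 2 / 4 := by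
      rw [rpow_two]; ring
    rw [this]; ring
  rw [e, jc]; ring

noncomputable def FF (α r x : ℝ) : ℝ := ∫ t in (0:ℝ)..x, t ^ r * jj α (t ^ 2 / 4)

lemma FF_eq (α β x : ℝ) (hx : 0 < x) :
    ∫ t in (0 : ℝ)..x, t ^ (-β) * besselJ α t = 2 ^ (-α) * FF α (α - β) x := by
  rw [FF, ← intervalIntegral.integral_const_mul]
  refine intervalIntegral.integral_congr_ae (Filter.Eventually.of_forall fun t ht => ?_)
  rw [Set.uIoc_of_le hx.le] at ht
  rw [besselJ_eq α t ht.1, sub_eq_neg_add, rpow_add ht.1]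
  ring

lemma ff_int (α r : ℝ) (hα : -1 < α) (hr : -1 < r) (a b : ℝ) :
    IntervalIntegrable (fun t => t ^ r * jj α (t ^ 2 / 4)) MeasureTheory.volume a b :=
  (intervalIntegral.intervalIntegrable_rpow' hr).mul_continuousOn (jq_cont α hα).continuousOn

lemma FF_deriv (α r : ℝ) (hα : -1 < α) (hr : -1 < r) (x : ℝ) (hx : 0 < x) :
    HasDerivAt (FF α r) (x ^ r * jj α (x ^ 2 / 4)) x := by
  refine intervalIntegral.integral_hasDerivAt_right (ff_int α r hα hr 0 x) ?_ ?_
  · refine ContinuousOn.stronglyMeasurableAtFilter_nhdsWithin (s := Set.Ioi 0) ?_ measurableSet_Ioi x |>.filter_mono ?_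
    · exact fun t ht => (pow_jq_deriv α r hα t ht).continuousAt.continuousWithinAt
    · rw [nhdsWithin_eq_nhds.2 (Ioi_mem_nhds hx)]
  · exact (pow_jq_deriv α r hα x hx).continuousAt

lemma FF_bound (α r : ℝ) (hα : -1 < α) (hr : -1 < r) :
    ∃ C, ∀ x, 0 < x → x ≤ 1 → |FF α r x| ≤ C * x ^ (r + 1) := by
  obtain ⟨C, hC⟩ := (isCompact_Icc (a := (0:ℝ)) (b := 1)).exists_bound_of_continuousOn
    (jq_cont α hα).continuousOn
  refine ⟨C / (r + 1), fun x hx hx1 => ?_⟩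
  have h := intervalIntegral.norm_integral_le_of_norm_le (f := fun t => t ^ r * jj α (t ^ 2 / 4))
    (g := fun t => t ^ r * C) (a := 0) (b := x) (μ := MeasureTheory.volume) hx.le ?_ ?_
  · rw [intervalIntegral.integral_mul_const, integral_rpow (Or.inl hr), zero_rpow (by linarith)] at h
    rw [FF, ← Real.norm_eq_abs]
    refine h.trans (le_of_eq ?_)
    ring
  · refine Filter.Eventually.of_forall fun t ht => ?_
    have h1 := hC t ⟨ht.1.le, ht.2.trans hx1⟩
    rw [norm_mul, Real.norm_eq_abs (t ^ r), abs_of_pos (rpow_pos_of_pos ht.1 r)]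
    exact mul_le_mul_of_nonneg_left h1 (rpow_pos_of_pos ht.1 r).le
  · exact (intervalIntegral.intervalIntegrable_rpow' hr).mul_const C

lemma part_one (α γ : ℝ) (hα : -1 < α) (hγ : 0 < γ) (hr : -1 < γ + (α + 1 / 2))
    (hF : ∀ x > 0, 0 ≤ FF α (γ + (α + 1 / 2)) x) : False := by
  obtain ⟨t0, ht0, hne⟩ := uu_ne α hα
  obtain ⟨c, hc, hosc⟩ := osc_main (α ^ 2 - 1 / 4) (uu α) (vv α) (uu_deriv α hα) (vv_deriv α hα)
    t0 ht0 hne 0 1 (by norm_num)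
  obtain ⟨M, hM0, hM⟩ := osc_bdd (α ^ 2 - 1 / 4) (uu α) (vv α) (uu_deriv α hα) (vv_deriv α hα)
  set F := FF α (γ + (α + 1 / 2)) with hFdef
  have hFd : ∀ x > 0, HasDerivAt F (x ^ γ * uu α x) x := by
    intro x hx
    refine (FF_deriv α _ hα hr x hx).congr_deriv ?_
    rw [uu, rpow_add hx]; ring
  set m := max (γ - 1) (γ / 2) with hm
  have hm0 : 0 < m := lt_of_lt_of_le (by positivity) (le_max_right _ _)
  have hmγ : m < γ := max_lt (by linarith) (by linarith)
  have hm1 : γ - 1 ≤ m := le_max_left _ _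
  set κ := (α ^ 2 - 1 / 4) - γ * (γ - 1) with hκ
  set L := |κ| * M / m with hL
  have hL0 : 0 ≤ L := by positivity
  let P : ℝ → ℝ := fun x => F x + x ^ γ * vv α x - γ * (x ^ (γ - 1) * uu α x) - L * x ^ m
  have hP : ∀ x > 0, HasDerivAt P (κ * x ^ (γ - 1 - 1) * uu α x - L * (m * x ^ (m - 1))) x := by
    intro x hx
    have h := (((hFd x hx).add ((hasDerivAt_rpow_const (p := γ) (Or.inl hx.ne')).mul (vv_deriv α hα x hx))).sub
      (((hasDerivAt_rpow_const (p := γ - 1) (Or.inl hx.ne')).mul (uu_deriv α hα x hx)).const_mul γ)).sub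
      ((hasDerivAt_rpow_const (p := m) (Or.inl hx.ne')).const_mul L)
    refine HasDerivAt.congr_deriv h ?_
    have e1 : x ^ γ = x ^ (γ - 1 - 1) * x ^ 2 := by
      rw [← rpow_natCast, ← rpow_add hx]; congr 1; push_cast; ring
    have e2 : x ^ (γ - 1) = x ^ (γ - 1 - 1) * x := by
      rw [← rpow_add_one hx.ne']; congr 1; ring
    rw [e1, e2, hκ]
    field_simp
    ring
  have hanti : AntitoneOn P (Set.Ici 1) := by
    apply antitoneOn_of_deriv_nonpos (convex_Ici 1)
    · exact fun t ht => (hP t (lt_of_lt_of_le one_pos ht)).continuousAt.continuousWithinAt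
    · rw [interior_Ici]
      exact fun t ht => (hP t (lt_trans one_pos ht)).differentiableAt.differentiableWithinAt
    · rw [interior_Ici]; intro t ht
      have ht1 : (1:ℝ) < t := ht
      have ht0 : (0:ℝ) < t := by linarith
      rw [(hP t ht0).deriv]
      have h1 : κ * t ^ (γ - 1 - 1) * uu α t ≤ |κ| * t ^ (m - 1) * M := by
        refine (le_abs_self _).trans ?_
        rw [abs_mul, abs_mul, abs_of_pos (rpow_pos_of_pos ht0 (γ - 1 - 1))]
        gcongr
        · exact ht1.le
        · exact (hM t ht1.le).1
      have h2 : L * (m * t ^ (m - 1)) = |κ| * t ^ (m - 1) * M := by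
        rw [hL]; field_simp
      linarith
  set Q := |P 1| + γ * M + L with hQ
  -- F x ≤ -c x^γ + Q x^m
  have hub : ∀ x ≥ 1, c ≤ vv α x → F x ≤ - c * x ^ γ + Q * x ^ m := by
    intro x hx hv
    have hx0 : 0 < x := by linarith
    have h1 : P x ≤ P 1 := hanti (Set.self_mem_Ici) hx hx
    have h2 : c * x ^ γ ≤ x ^ γ * vv α x := by
      rw [mul_comm]; gcongr
    have h3 : γ * (x ^ (γ - 1) * uu α x) ≤ γ * (x ^ m * M) := by
      refine mul_le_mul_of_nonneg_left ?_ hγ.le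
      refine (le_abs_self _).trans ?_
      rw [abs_mul, abs_of_pos (rpow_pos_of_pos hx0 _)]
      gcongr
      exact (hM x hx).1
    have h4 : 1 ≤ x ^ m := one_le_rpow hx hm0.le
    have h5 : P 1 ≤ |P 1| * x ^ m := (le_abs_self _).trans (le_mul_of_one_le_right (abs_nonneg _) h4)
    have h6 : P x = F x + x ^ γ * vv α x - γ * (x ^ (γ - 1) * uu α x) - L * x ^ m := rfl
    rw [hQ]
    linarith
  have ht : Filter.Tendsto (fun x : ℝ => x ^ (γ - m)) Filter.atTop Filter.atTop :=
    tendsto_rpow_atTop (by linarith)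
  obtain ⟨T, hT⟩ := Filter.eventually_atTop.1 (ht.eventually_gt_atTop (Q / c))
  obtain ⟨x, hxT, hx⟩ := hosc (max T 1)
  have hx1 : 1 ≤ x := (le_max_right _ _).trans hxT
  have hx0 : 0 < x := by linarith
  have h1 := hub x hx1 (by linarith)
  have h2 := hT x ((le_max_left _ _).trans hxT)
  rw [div_lt_iff₀ hc] at h2
  have h3 := hF x hx0
  have h4 : x ^ γ = x ^ (γ - m) * x ^ m := by rw [← rpow_add hx0]; congr 1; ring
  have h5 := rpow_pos_of_pos hx0 m
  rw [h4] at h1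
  nlinarith

lemma part_two (α β : ℝ) (hα : -1 < α) (hβ : β < α + 1) (hδ : α + 1 + β ≤ 0)
    (hF : ∀ x > 0, 0 ≤ FF α (α - β) x) : False := by
  have hα1 : -1 < α + 1 := by linarith
  obtain ⟨t0, ht0, hne⟩ := uu_ne (α + 1) hα1
  obtain ⟨c, hc, hosc⟩ := osc_main ((α + 1) ^ 2 - 1 / 4) (uu (α + 1)) (vv (α + 1))
    (uu_deriv _ hα1) (vv_deriv _ hα1) t0 ht0 hne (-1) 0 (by norm_num)
  have hr : -1 < α - β := by linarith
  set F := FF α (α - β) with hFdef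
  set δ := α + 1 + β with hδdef
  let H : ℝ → ℝ := fun x => 1 / 2 * (x ^ (2 * α + 2) * jj (α + 1) (x ^ 2 / 4)) - x ^ δ * F x
  have hH : ∀ x > 0, HasDerivAt H (-δ * x ^ (δ - 1) * F x) x := by
    intro x hx
    have h := ((pow_jq_deriv (α + 1) (2 * α + 2) hα1 x hx).const_mul (1 / 2)).sub
      ((hasDerivAt_rpow_const (p := δ) (Or.inl hx.ne')).mul (FF_deriv α (α - β) hα hr x hx))
    refine HasDerivAt.congr_deriv h ?_
    have r := jj_rec α hα (x ^ 2 / 4)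
    have e1 : x ^ δ = x ^ (2 * α + 2 - 1) * (x ^ (α - β))⁻¹ := by
      rw [← rpow_neg hx.le, ← rpow_add hx]; congr 1; rw [hδdef]; ring
    have e2 : x ^ (2 * α + 2 + 1) = x ^ (2 * α + 2 - 1) * x ^ 2 := by
      rw [← rpow_natCast, ← rpow_add hx]; congr 1; push_cast; ring
    have e3 : x ^ δ * (x ^ (α - β) * jj α (x ^ 2 / 4)) = x ^ (2 * α + 2 - 1) * jj α (x ^ 2 / 4) := by
      have := (rpow_pos_of_pos hx (α - β)).ne'
      rw [e1]; field_simp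
    rw [e3, e2, show α + 1 + 1 = α + 2 by ring]
    linear_combination (-x ^ (2 * α + 2 - 1)) * r
  have hmono : MonotoneOn H (Set.Ioi 0) := by
    apply monotoneOn_of_deriv_nonneg (convex_Ioi 0)
    · exact fun t ht => (hH t ht).continuousAt.continuousWithinAt
    · rw [interior_Ioi]; exact fun t ht => (hH t ht).differentiableAt.differentiableWithinAt
    · rw [interior_Ioi]; intro t ht
      rw [(hH t ht).deriv]
      exact mul_nonneg (mul_nonneg (by linarith) (rpow_pos_of_pos ht _).le) (hF t ht)
  obtain ⟨C, hC⟩ := FF_bound α (α - β) hα hr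
  have tz : Filter.Tendsto (fun x : ℝ => x ^ (2 * α + 2)) (nhdsWithin 0 (Set.Ioi 0)) (nhds 0) := by
    have : ContinuousAt (fun x : ℝ => x ^ (2 * α + 2)) 0 :=
      continuousAt_rpow_const _ _ (Or.inr (by linarith))
    have h := this.tendsto
    rw [zero_rpow (by linarith)] at h
    exact h.mono_left nhdsWithin_le_nhds
  have hlim : Filter.Tendsto H (nhdsWithin 0 (Set.Ioi 0)) (nhds 0) := by
    have h1 : Filter.Tendsto (fun x : ℝ => jj (α + 1) (x ^ 2 / 4)) (nhdsWithin 0 (Set.Ioi 0))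
        (nhds (jj (α + 1) ((0:ℝ) ^ 2 / 4))) :=
      ((jq_cont (α + 1) hα1).tendsto 0).mono_left nhdsWithin_le_nhds
    have h2 : Filter.Tendsto (fun x : ℝ => x ^ δ * F x) (nhdsWithin 0 (Set.Ioi 0)) (nhds 0) := by
      have h3 := tz.const_mul C
      rw [mul_zero] at h3
      refine squeeze_zero_norm' ?_ h3
      filter_upwards [Ioc_mem_nhdsGT (zero_lt_one' ℝ)] with x hx
      rw [norm_mul, Real.norm_eq_abs, Real.norm_eq_abs, abs_of_pos (rpow_pos_of_pos hx.1 _)]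
      calc _ ≤ x ^ δ * (C * x ^ (α - β + 1)) :=
            mul_le_mul_of_nonneg_left (hC x hx.1 hx.2) (rpow_pos_of_pos hx.1 _).le
        _ = C * (x ^ δ * x ^ (α - β + 1)) := by ring
        _ = _ := by rw [← rpow_add hx.1]; congr 2; rw [hδdef]; ring
    have := ((tz.mul h1).const_mul (1 / 2)).sub h2
    simpa [H] using this
  have hHn : ∀ x > 0, 0 ≤ H x := by
    intro x hx
    refine le_of_tendsto hlim ?_
    filter_upwards [Ioc_mem_nhdsGT hx] with y hy
    exact hmono hy.1 hx hy.2
  obtain ⟨x, hx1, hx⟩ := hosc 1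
  have hx0 : 0 < x := by linarith
  have h1 := hHn x hx0
  have h2 : 0 ≤ x ^ δ * F x := mul_nonneg (rpow_pos_of_pos hx0 _).le (hF x hx0)
  have h3 : 0 ≤ x ^ (2 * α + 2) * jj (α + 1) (x ^ 2 / 4) := by
    have h6 : H x = 1 / 2 * (x ^ (2 * α + 2) * jj (α + 1) (x ^ 2 / 4)) - x ^ δ * F x := rfl
    linarith
  have h4 := nonneg_of_mul_nonneg_right h3 (rpow_pos_of_pos hx0 _)
  have h5 : 0 ≤ uu (α + 1) x := mul_nonneg (rpow_pos_of_pos hx0 _).le h4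
  linarith

theorem stmt8 (α β : ℝ) (hα : -1 < α) (hβ : β < α + 1)
    (hpos : ∀ x : ℝ, 0 < x → 0 ≤ ∫ t in (0 : ℝ)..x, t ^ (-β) * besselJ α t) :
    -α - 1 < β ∧ β < α + 1 ∧ -1 / 2 ≤ β := by
  have hF : ∀ x > 0, 0 ≤ FF α (α - β) x := by
    intro x hx
    have h := hpos x hx
    rw [FF_eq α β x hx] at h
    exact nonneg_of_mul_nonneg_right h (rpow_pos_of_pos (by norm_num) _)
  refine ⟨?_, hβ, ?_⟩
  · by_contra hcon
    exact part_two α β hα hβ (by linarith) hF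
  · by_contra hcon
    have e : α - β = (-β - 1 / 2) + (α + 1 / 2) := by ring
    rw [e] at hF
    exact part_one α (-β - 1 / 2) hα (by linarith) (by linarith) hF
end

section
/- Let α > −1 and β be real numbers with max(−1/2, −(α+1)/3) ≤ β < α + 1. Then ∫₀ˣ t^{−β} J_α(t) dt ≥ 0 for every x > 0; moreover, the inequality is strict for every x > 0 unless (α, β) = (1/2, −1/2). -/
open Real

/-- Rising factorial. -/
noncomputable def poch (q : ℝ) (n : ℕ) : ℝ := ∏ i ∈ Finset.range n, (q + i)

theorem poch_zero (q : ℝ) : poch q 0 = 1 := by simp [poch]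

theorem poch_succ (q : ℝ) (n : ℕ) : poch q (n + 1) = poch q n * (q + n) := by
  simp [poch, Finset.prod_range_succ]

theorem poch_add (q : ℝ) (m n : ℕ) : poch q (m + n) = poch q m * poch (q + m) n := by
  simp [poch, Finset.prod_range_add, add_assoc]

theorem poch_pos {q : ℝ} (hq : 0 < q) (n : ℕ) : 0 < poch q n :=
  Finset.prod_pos fun i _ => by positivity

theorem poch_mono {q r : ℝ} (hq : 0 < q) (h : q ≤ r) (n : ℕ) : poch q n ≤ poch r n :=
  Finset.prod_le_prod (fun i _ => by positivity) (fun i _ => by linarith)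

theorem pow_le_poch {q : ℝ} (hq : 0 < q) (n : ℕ) : q ^ n ≤ poch q n := by
  induction n with
  | zero => simp [poch]
  | succ n ih =>
    rw [poch_succ, pow_succ]
    have : (0:ℝ) ≤ n := n.cast_nonneg
    have := poch_pos hq n
    gcongr
    linarith

theorem poch_two_mul (q : ℝ) (k : ℕ) :
    poch (2 * q) (2 * k) = 4 ^ k * poch q k * poch (q + 1 / 2) k := by
  induction k with
  | zero => simp [poch]
  | succ k ih =>
    rw [show 2 * (k + 1) = 2 * k + 1 + 1 by ring, poch_succ, poch_succ, ih, poch_succ, poch_succ]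
    push_cast
    ring

theorem Gamma_poch {b : ℝ} (hb : 0 < b) (k : ℕ) :
    Real.Gamma (b + k) = Real.Gamma b * poch b k := by
  induction k with
  | zero => simp [poch]
  | succ k ih =>
    rw [poch_succ, Nat.cast_succ, ← add_assoc, Real.Gamma_add_one (by positivity), ih]
    ring

theorem factorial_mul_choose (X : ℝ) (n : ℕ) :
    (n.factorial : ℝ) * Ring.choose X n = ∏ i ∈ Finset.range n, (X - i) := by
  have h := Ring.descPochhammer_eq_factorial_smul_choose X n
  rw [nsmul_eq_mul] at h
  rw [← h, ← Polynomial.aeval_eq_smeval, Polynomial.aeval_def, ← descPochhammer_eval_eq_prod_range,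
    ← descPochhammer_map (algebraMap ℤ ℝ), Polynomial.eval_map]

theorem choose_poch (X : ℝ) (n : ℕ) :
    Ring.choose X n = poch (X - n + 1) n / n.factorial := by
  have h := factorial_mul_choose X n
  have hn : (n.factorial : ℝ) ≠ 0 := by positivity
  rw [eq_div_iff hn, mul_comm, h, poch, ← Finset.prod_range_reflect]
  refine Finset.prod_congr rfl fun i hi => ?_
  have : i < n := Finset.mem_range.1 hi
  rw [Nat.sub_sub, Nat.cast_sub (by omega)]
  push_cast
  ring

theorem vander {q : ℝ} (hq : 0 < q) (k : ℕ) :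
    ∑ x ∈ Finset.HasAntidiagonal.antidiagonal k,
      1 / ((x.1.factorial : ℝ) * poch q x.1) * (1 / ((x.2.factorial : ℝ) * poch q x.2)) =
      poch (2 * q - 1 + k) k / (k.factorial * poch q k ^ 2) := by
  have h := Ring.add_choose_eq k (Commute.refl (q + k - 1 : ℝ))
  rw [choose_poch] at h
  have hk := poch_pos hq k
  rw [show (2 * q - 1 + k) = q + k - 1 + (q + k - 1) - k + 1 by ring, div_mul_eq_div_div, h,
    Finset.sum_div]
  refine Finset.sum_congr rfl fun x hx => ?_
  obtain ⟨i, j⟩ := x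
  have hij : i + j = k := by simpa using hx
  simp only
  rw [choose_poch, choose_poch]
  have h1 : poch q k = poch q i * poch (q + i) j := by rw [← hij, poch_add]
  have h2 : poch q k = poch q j * poch (q + j) i := by rw [← hij, add_comm i j, poch_add]
  have e1 : q + k - 1 - i + 1 = q + j := by rw [← hij]; push_cast; ring
  have e2 : q + k - 1 - j + 1 = q + i := by rw [← hij]; push_cast; ring
  rw [e1, e2]
  have p1 := poch_pos hq i
  have p2 := poch_pos hq j
  have p3 : 0 < poch (q + i) j := poch_pos (by positivity) j
  have p4 : 0 < poch (q + j) i := poch_pos (by positivity) i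
  rw [sq]
  nth_rewrite 1 [h1]
  rw [h2]
  field_simp

section RE

/-- Coefficients of the sums-of-squares expansion and the auxiliary defect sequence. -/
noncomputable def RE (a b : ℝ) : ℕ → ℝ × ℝ
  | 0 => (1, (b / 2 - a + 1 / 4) / (b * (a + 1)))
  | n + 1 =>
    ((n + 1 / 2) * (n + b - a - 1 / 2) / ((n + b) * (n + a + 1)) * (RE a b n).1 + (RE a b n).2,
     ((b + 1 / 2 - 2 * a) * (n + 1 + b / 2 - 1 / 4) *
        ((n + 1 / 2) * (n + b - a - 1 / 2) / ((n + b) * (n + a + 1)) * (RE a b n).1 + (RE a b n).2)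
      + (n + 1) * (n + b) * (n + 1 + a) * (RE a b n).2)
      / ((n + 1 + b) * (n + a + 2) * (n + b + 1 / 2)))

variable {a b : ℝ}

theorem RE1_succ (n : ℕ) : (RE a b (n + 1)).1 =
    (n + 1 / 2) * (n + b - a - 1 / 2) / ((n + b) * (n + a + 1)) * (RE a b n).1 + (RE a b n).2 := rfl

theorem RE2_succ (n : ℕ) : (RE a b (n + 1)).2 =
    ((b + 1 / 2 - 2 * a) * (n + 1 + b / 2 - 1 / 4) * (RE a b (n + 1)).1
      + (n + 1) * (n + b) * (n + 1 + a) * (RE a b n).2)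
      / ((n + 1 + b) * (n + a + 2) * (n + b + 1 / 2)) := rfl

theorem RE1_one (ha : 0 < a) (hb : 0 < b) :
    b * (a + 1) * (RE a b 1).1 = b - 3 * a / 2 := by
  have h := RE1_succ (a := a) (b := b) 0
  rw [zero_add] at h
  rw [h]
  simp only [RE]
  push_cast
  field_simp
  ring

theorem RE_three (ha : 0 < a) (hb : 0 < b) (n : ℕ) :
    (n + 1 + b) * (n + a + 2) * (n + b + 1 / 2) * (RE a b (n + 2)).1
      + (n + 1) * (n + 1 / 2) * (n + b - a - 1 / 2) * (RE a b n).1 =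
    ((n + 1 + b) * (n + a + 2) * (n + b + 1 / 2) + (n + 1) * (n + 1 / 2) * (n + b - a - 1 / 2)
      - a * (b + 3 / 2) * (2 * n + 2 + b - 1 / 2)) * (RE a b (n + 1)).1 := by
  have h0 := RE1_succ (a := a) (b := b) n
  have h1 := RE1_succ (a := a) (b := b) (n + 1)
  rw [RE2_succ] at h1
  have hn : (0:ℝ) ≤ n := n.cast_nonneg
  have q1 : (n + b) ≠ 0 := by positivity
  have q2 : (n + a + 1) ≠ 0 := by positivity
  have q3 : (n + 1 + b) ≠ 0 := by positivity
  have q4 : (n + a + 2) ≠ 0 := by positivity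
  have q5 : (n + b + 1/2) ≠ 0 := by positivity
  have he : (RE a b n).2 = (RE a b (n + 1)).1 -
    (n + 1 / 2) * (n + b - a - 1 / 2) / ((n + b) * (n + a + 1)) * (RE a b n).1 := by
    rw [h0]; ring
  rw [show n + 2 = n + 1 + 1 from rfl, h1, he]
  generalize (RE a b (n + 1)).1 = r1
  generalize (RE a b n).1 = r0
  push_cast
  have q6 : (n + 1 + a + 1) ≠ 0 := by positivity
  field_simp
  ring

theorem RE_nonneg (ha : 0 < a) (h1 : 3 * a ≤ 2 * b) (h2 : 2 * a ≤ b + 1 / 2) (n : ℕ) :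
    0 ≤ (RE a b n).1 ∧ 0 ≤ (RE a b n).2 ∧ 0 ≤ (RE a b (n + 1)).1 := by
  have hb : 0 < b := by linarith
  induction n with
  | zero =>
    have h3 := RE1_one ha hb
    refine ⟨by simp [RE], ?_, ?_⟩
    · simp only [RE]
      apply div_nonneg _ (by positivity)
      linarith
    · by_contra h
      push Not at h
      have : b * (a + 1) * (RE a b 1).1 < 0 := mul_neg_of_pos_of_neg (by positivity) h
      linarith
  | succ n ih =>
    obtain ⟨i1, i2, i3⟩ := ih
    have hn : (0:ℝ) ≤ n := n.cast_nonneg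
    have k2 : 0 ≤ (RE a b (n + 1)).2 := by
      rw [RE2_succ]
      have : 0 ≤ b + 1 / 2 - 2 * a := by linarith
      have : 0 ≤ n + 1 + b / 2 - 1 / 4 := by linarith
      positivity
    refine ⟨i3, k2, ?_⟩
    rw [RE1_succ]
    have : 0 ≤ ((n + 1 : ℕ) : ℝ) + b - a - 1 / 2 := by push_cast; linarith
    positivity

theorem RE_pos (ha : 0 < a) (h1 : 3 * a ≤ 2 * b) (h2 : 2 * a ≤ b + 1 / 2)
    (hne : ¬ (a = 1 ∧ b = 3 / 2)) (n : ℕ) : 0 < (RE a b (n + 2)).1 := by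
  have hb : 0 < b := by linarith
  have key : ∀ n : ℕ, 0 < (RE a b (n+1)).1 ∨ 0 < (RE a b (n + 1)).2 → 0 < (RE a b (n + 2)).1 := by
    intro n h
    obtain ⟨i1, i2, i3⟩ := RE_nonneg ha h1 h2 (n + 1)
    rw [show n + 2 = n + 1 + 1 from rfl, RE1_succ]
    have : 0 < ((n + 1 : ℕ) : ℝ) + b - a - 1 / 2 := by
      have hn : (0:ℝ) ≤ n := n.cast_nonneg
      push_cast; linarith
    rcases h with h | h <;> positivity
  rcases h2.lt_or_eq with h | h
  · apply key
    right
    have e : ∀ n, 0 < (RE a b n).2 := by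
      intro n
      induction n with
      | zero =>
        simp only [RE]
        apply div_pos _ (by positivity)
        linarith
      | succ n ih =>
        obtain ⟨i1, i2, i3⟩ := RE_nonneg ha h1 h2 n
        have hn : (0:ℝ) ≤ n := n.cast_nonneg
        rw [RE2_succ]
        have : 0 < b + 1 / 2 - 2 * a := by linarith
        have : 0 ≤ n + 1 + b / 2 - 1 / 4 := by linarith
        positivity
    exact e _
  · have h3 : 0 < (RE a b 1).1 := by
      have h3 := RE1_one ha hb
      by_contra hh
      push Not at hh
      have : b * (a + 1) * (RE a b 1).1 ≤ 0 := mul_nonpos_of_nonneg_of_nonpos (by positivity) hh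
      exact hne ⟨by linarith, by linarith⟩
    have e : ∀ n, 0 < (RE a b (n + 1)).1 := by
      intro n
      induction n with
      | zero => exact h3
      | succ n ih => exact key n (Or.inl ih)
    exact e _

theorem RE_bound (ha : 0 < a) (h1 : 3 * a ≤ 2 * b) (h2 : 2 * a ≤ b + 1 / 2) (n : ℕ) :
    (RE a b n).1 + (RE a b n).2 ≤ 4 ^ n * (1 + (RE a b 0).2) := by
  have hb : 0 < b := by linarith
  induction n with
  | zero => simp [RE]
  | succ n ih =>
    obtain ⟨i1, i2, i3⟩ := RE_nonneg ha h1 h2 n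
    have hn : (0:ℝ) ≤ n := n.cast_nonneg
    have A : (RE a b (n + 1)).1 ≤ (RE a b n).1 + (RE a b n).2 := by
      rw [RE1_succ]
      have : (n + 1 / 2) * (n + b - a - 1 / 2) / ((n + b) * (n + a + 1)) ≤ 1 := by
        rw [div_le_one (by positivity)]
        nlinarith [mul_nonneg hn hb.le, mul_nonneg hn ha.le, mul_pos ha hb]
      nlinarith
    have B : (RE a b (n + 1)).2 ≤ 2 * (RE a b (n + 1)).1 + (RE a b n).2 := by
      rw [RE2_succ]
      rw [div_le_iff₀ (by positivity)]
      have c1 : (b + 1 / 2 - 2 * a) * (n + 1 + b / 2 - 1 / 4) ≤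
        2 * ((n + 1 + b) * (n + a + 2) * (n + b + 1 / 2)) := by
        have : (b + 1 / 2 - 2 * a) * (n + 1 + b / 2 - 1 / 4) ≤
          (n + 1 + b) * (2 * (n + b + 1/2)) :=
          mul_le_mul (by linarith) (by linarith) (by linarith) (by positivity)
        have t : 0 ≤ (n + 1 + b) * (2 * (n + b + 1/2)) := by positivity
        nlinarith
      have c2 : (n + 1) * (n + b) * (n + 1 + a) ≤ (n + 1 + b) * (n + a + 2) * (n + b + 1 / 2) := by
        have : (n + 1) * (n + b) ≤ (n + 1 + b) * (n + b + 1 / 2) := by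
          apply mul_le_mul <;> first | linarith | positivity
        have t : (n + 1) * (n + b) * (n + 1 + a) ≤ (n + 1 + b) * (n + b + 1 / 2) * (n + a + 2) := by
          apply mul_le_mul <;> first | linarith | positivity
        linarith
      have d1 := mul_le_mul_of_nonneg_right c1 i3
      have d2 := mul_le_mul_of_nonneg_right c2 i2
      linarith
    rw [pow_succ]
    linarith

end RE

section S

/-- Triangular array. -/
noncomputable def DD (p : ℝ) (n k : ℕ) : ℝ :=
  if n ≤ k then 1 / (((k - n).factorial : ℝ) * poch p (k + n)) else 0

theorem DD_k {p : ℝ} (hp : 0 < p) (n k : ℕ) :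
    DD p n k = (k + 1 - n) * (p + k + n) * DD p n (k + 1) := by
  unfold DD
  rcases lt_trichotomy n (k + 1) with h | h | h
  · rw [if_pos (by omega), if_pos (by omega)]
    obtain ⟨j, rfl⟩ : ∃ j, k = n + j := ⟨k - n, by omega⟩
    rw [show n + j - n = j by omega, show n + j + 1 - n = j + 1 by omega,
      show n + j + 1 + n = (n + j + n) + 1 by ring, poch_succ, Nat.factorial_succ]
    have := poch_pos hp (n + j + n)
    push_cast
    have h1 : (j:ℝ) + 1 ≠ 0 := by positivity
    have h2 : p + (n + j + n) ≠ 0 := by positivity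
    field_simp
    ring
  · subst h
    simp
  · rw [if_neg (by omega), if_neg (by omega)]; simp

theorem DD_n {p : ℝ} (hp : 0 < p) (n k : ℕ) :
    (p + k + n) * DD p (n + 1) k = (k - n) * DD p n k := by
  unfold DD
  rcases lt_trichotomy n k with h | h | h
  · rw [if_pos (by omega), if_pos (by omega)]
    obtain ⟨j, rfl⟩ : ∃ j, k = n + 1 + j := ⟨k - n - 1, by omega⟩
    rw [show n + 1 + j - n = j + 1 by omega, show n + 1 + j - (n + 1) = j by omega,
      ← add_assoc, poch_succ, Nat.factorial_succ]
    have := poch_pos hp (n + 1 + j + n)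
    push_cast
    have h1 : (j:ℝ) + 1 ≠ 0 := by positivity
    have h2 : p + (n + 1 + j + n) ≠ 0 := by positivity
    field_simp
    ring
  · subst h
    simp
  · rw [if_neg (by omega), if_neg (by omega)]; simp

theorem DD_a {p : ℝ} (hp : 0 < p) (m k : ℕ) :
    DD p m k = (p + k + m) * (p + k + m + 1) * DD p (m + 1) (k + 1) := by
  have h1 := DD_k hp m k
  have h2 := DD_n hp m (k + 1)
  push_cast at h1 h2
  rw [h1]
  linear_combination (-(p + k + m)) * h2

theorem DD_b {p : ℝ} (hp : 0 < p) (m k : ℕ) :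
    DD p (m + 1) k = (k - m) * (p + k + m + 1) * DD p (m + 1) (k + 1) := by
  rw [DD_k hp]; push_cast; ring

theorem DD_c {p : ℝ} (hp : 0 < p) (m k : ℕ) :
    DD p (m + 2) k = (k - m - 1) * (k - m) * DD p (m + 1) (k + 1) := by
  have h1 := DD_n hp (m + 1) k
  rw [DD_b hp m k] at h1
  have : p + k + m + 1 ≠ 0 := by positivity
  apply mul_left_cancel₀ this
  push_cast at h1
  linear_combination h1

/-- Ratio of Pochhammer to factorial. -/
noncomputable def YY (p : ℝ) (n : ℕ) : ℝ := poch p n / n.factorial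

theorem YY_succ (p : ℝ) (n : ℕ) : YY p (n + 1) = YY p n * (p + n) / (n + 1) := by
  unfold YY
  rw [poch_succ, Nat.factorial_succ]
  push_cast
  field_simp

/-- Weights. -/
noncomputable def WW (p : ℝ) : ℕ → ℝ
  | 0 => 1
  | n + 1 => (2 * n + 1 + p) * YY p n / (n + 1)

variable {a b : ℝ}

theorem S_alg (a b m k Q Y σ r0 r1 r2 : ℝ) (hm : m + 1 ≠ 0)
    (h3 : (m + 1 + b) * (m + a + 2) * (m + b + 1 / 2) * r2
        + (m + 1) * (m + 1 / 2) * (m + b - a - 1 / 2) * r0 =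
      ((m + 1 + b) * (m + a + 2) * (m + b + 1 / 2) + (m + 1) * (m + 1 / 2) * (m + b - a - 1 / 2)
        - a * (b + 3 / 2) * (2 * m + 2 + b - 1 / 2)) * r1) :
    σ * -1 * Y * ((m + 1 / 2) * (m + b - a - 1 / 2) * ((k - m) * (b + 1 / 2 + k + m + 1) * Q) * r0 +
      (m + b) * (m + a + 1) * ((b + 1 / 2 + k + m) * (b + 1 / 2 + k + m + 1) * Q) * r1) +
    r1 * (σ * -1 * ((2 * m + 1 + (b + 1 / 2)) * Y / (m + 1)) *
      ((2 * k + b + 3 / 2) * (k + a) * ((k - m) * (b + 1 / 2 + k + m + 1) * Q) -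
       (2 * k + b + 1 / 2) * (k + b) * (k + a + 1) * (k + 1) * Q)) =
    σ * -1 * -1 * (Y * (b + 1 / 2 + m) / (m + 1)) *
      ((m + 1 + 1 / 2) * (m + 1 + b - a - 1 / 2) * ((k - m - 1) * (k - m) * Q) * r1 +
       (m + 1 + b) * (m + 1 + a + 1) * ((k - m) * (b + 1 / 2 + k + m + 1) * Q) * r2) := by
  obtain ⟨Z, rfl⟩ : ∃ Z, Y = (m + 1) * Z := ⟨Y / (m + 1), by field_simp⟩
  have e1 : (2 * m + 1 + (b + 1 / 2)) * ((m + 1) * Z) / (m + 1) = (2 * m + 1 + (b + 1 / 2)) * Z := by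
    field_simp
  have e2 : ((m + 1) * Z) * (b + 1 / 2 + m) / (m + 1) = Z * (b + 1 / 2 + m) := by
    field_simp
  rw [e1, e2]
  linear_combination (-σ * Z * Q * (k - m) * (b + 1 / 2 + k + m + 1)) * h3

theorem S_boundary (ha : 0 < a) (hb : 0 < b) (k m : ℕ) :
    ∑ n ∈ Finset.range (m + 1), (RE a b n).1 * ((-1) ^ n * WW (b + 1 / 2) n *
      ((2 * k + b + 3 / 2) * (k + a) * DD (b + 1 / 2) n k
       - (2 * k + b + 1 / 2) * (k + b) * (k + a + 1) * (k + 1) * DD (b + 1 / 2) n (k + 1))) =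
    (-1) ^ (m + 1) * YY (b + 1 / 2) m *
      ((m + 1 / 2) * (m + b - a - 1 / 2) * DD (b + 1 / 2) (m + 1) k * (RE a b m).1
        + (m + b) * (m + a + 1) * DD (b + 1 / 2) m k * (RE a b (m + 1)).1) := by
  have hp : 0 < b + 1 / 2 := by linarith
  induction m with
  | zero =>
    have h1 := RE1_one ha hb
    have d1 := DD_k hp 0 k
    have d2 := DD_n hp 0 k
    rw [Nat.cast_zero] at d1 d2
    have hk : b + 1 / 2 + k + 0 ≠ 0 := by positivity
    have d3 : DD (b + 1/2) (0 + 1) k = k * (k + 1) * DD (b + 1/2) 0 (k + 1) := by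
      apply mul_left_cancel₀ hk
      push_cast at d1 d2
      rw [d2, d1]
      ring
    simp only [zero_add] at d3
    simp only [zero_add, Finset.sum_range_one, WW, YY, poch_zero, Nat.factorial, Nat.cast_zero]
    simp only [show (RE a b 0).1 = 1 from rfl]
    rw [d3, d1]
    push_cast
    linear_combination ((k + 1) * (b + 1 / 2 + k) * DD (b + 1 / 2) 0 (k + 1)) * h1
  | succ m ih =>
    rw [Finset.sum_range_succ, ih]
    have h3 := RE_three ha hb m
    rw [DD_a hp m k, DD_b hp m k, DD_c hp m k, YY_succ]
    simp only [WW]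
    generalize DD (b + 1 / 2) (m + 1) (k + 1) = Q at *
    generalize YY (b + 1 / 2) m = Y at *
    simp only [pow_succ]
    generalize ((-1:ℝ) ^ m) = σ at *
    push_cast
    rw [show m + 1 + 1 = m + 2 from rfl]
    generalize (RE a b m).1 = r0 at *
    generalize (RE a b (m+1)).1 = r1 at *
    generalize (RE a b (m+2)).1 = r2 at *
    have hm : (m:ℝ) + 1 ≠ 0 := by positivity
    exact S_alg a b m k Q Y σ r0 r1 r2 hm h3
end S

section T
variable {a b : ℝ}

theorem S_closed (ha : 0 < a) (hb : 0 < b) (k : ℕ) :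
    ∑ n ∈ Finset.range (k + 1), (RE a b n).1 * ((-1) ^ n * WW (b + 1 / 2) n * DD (b + 1 / 2) n k) =
    poch ((b + 3 / 2) / 2) k * a /
      (poch ((b + 1 / 2) / 2) k * k.factorial * poch b k * (a + k)) := by
  induction k with
  | zero =>
    simp [WW, DD, poch_zero, RE]
    field_simp
  | succ k ih =>
    have h := S_boundary ha hb k (k + 1)
    have d1 : DD (b + 1 / 2) (k + 1) k = 0 := by simp [DD]
    have d2 : DD (b + 1 / 2) (k + 1 + 1) k = 0 := by
      unfold DD
      rw [if_neg (by omega)]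
    rw [d1, d2] at h
    have e : ∀ n ∈ Finset.range (k + 1 + 1), (RE a b n).1 * ((-1) ^ n * WW (b + 1 / 2) n *
      ((2 * k + b + 3 / 2) * (k + a) * DD (b + 1 / 2) n k
       - (2 * k + b + 1 / 2) * (k + b) * (k + a + 1) * (k + 1) * DD (b + 1 / 2) n (k + 1))) =
      ((2 * k + b + 3 / 2) * (k + a)) *
        ((RE a b n).1 * ((-1) ^ n * WW (b + 1 / 2) n * DD (b + 1 / 2) n k))
      - ((2 * k + b + 1 / 2) * (k + b) * (k + a + 1) * (k + 1)) *
        ((RE a b n).1 * ((-1) ^ n * WW (b + 1 / 2) n * DD (b + 1 / 2) n (k + 1))) := by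
      intro n _
      ring
    rw [Finset.sum_congr rfl e, Finset.sum_sub_distrib, ← Finset.mul_sum, ← Finset.mul_sum,
      Finset.sum_range_succ _ (k + 1), d1, ih] at h
    have q1 : (2 * k + b + 1 / 2) * (k + b) * (k + a + 1) * (k + 1) ≠ 0 := by positivity
    apply mul_left_cancel₀ q1
    have p1 : 0 < poch ((b + 1 / 2) / 2) k := poch_pos (by positivity) k
    have p2 : 0 < poch b k := poch_pos hb k
    have h' := (sub_eq_zero.1 (h.trans (by simp))).symm
    rw [h', poch_succ, poch_succ, poch_succ, Nat.factorial_succ]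
    have q2 : (b + 1 / 2) / 2 + k ≠ 0 := by positivity
    have q3 : b + k ≠ 0 := by positivity
    have q4 : a + k ≠ 0 := by positivity
    have q5 : a + (k + 1) ≠ 0 := by positivity
    push_cast
    field_simp
    ring

/-- Square coefficients. -/
noncomputable def sq_coef (q : ℝ) (j : ℕ) : ℝ :=
  poch (2 * q - 1 + j) j / (j.factorial * poch q j ^ 2)

/-- Expansion coefficients. -/
noncomputable def cc (a b : ℝ) (n : ℕ) : ℝ :=
  WW (b + 1 / 2) n * (RE a b n).1 / poch ((b + 3 / 2) / 2) n ^ 2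

theorem coef_identity (ha : 0 < a) (hb : 0 < b) (k : ℕ) :
    ∑ x ∈ Finset.HasAntidiagonal.antidiagonal k,
      cc a b x.1 * ((-1) ^ x.2 * sq_coef ((b + 3 / 2) / 2 + x.1) x.2) =
    (-4) ^ k * (a / (k.factorial * poch b k * (a + k))) := by
  have hS := S_closed ha hb k
  rw [Finset.Nat.sum_antidiagonal_eq_sum_range_succ
    (fun n j => cc a b n * ((-1) ^ j * sq_coef ((b + 3 / 2) / 2 + n) j))]
  have hp : 0 < b + 1 / 2 := by linarith
  have hq : 0 < (b + 3 / 2) / 2 := by linarith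
  have pq := poch_pos hq k
  have key : ∀ n ∈ Finset.range k.succ,
      cc a b n * ((-1) ^ (k - n) * sq_coef ((b + 3 / 2) / 2 + n) (k - n)) =
      ((-1) ^ k * poch (b + 1 / 2) (2 * k) / poch ((b + 3 / 2) / 2) k ^ 2) *
        ((RE a b n).1 * ((-1) ^ n * WW (b + 1 / 2) n * DD (b + 1 / 2) n k)) := by
    intro n hn
    have hn' : n ≤ k := by simpa [Nat.lt_succ_iff] using hn
    obtain ⟨j, rfl⟩ := Nat.exists_eq_add_of_le hn'
    unfold cc sq_coef DD
    rw [if_pos hn', show n + j - n = j by omega, poch_add ((b + 3/2)/2) n j,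
      show 2 * (n + j) = (n + j + n) + j by ring, poch_add (b + 1/2) (n + j + n) j]
    have e : 2 * ((b + 3 / 2) / 2 + n) - 1 + j = b + 1 / 2 + ((n + j + n : ℕ) : ℝ) := by
      push_cast; ring
    rw [e]
    have p1 := poch_pos hp (n + j + n)
    have p2 := poch_pos hq n
    have p3 : 0 < poch ((b + 3 / 2) / 2 + n) j := poch_pos (by positivity) j
    have s : (-1 : ℝ) ^ (n + j) * (-1) ^ n = (-1) ^ j := by
      rw [pow_add, mul_right_comm, ← mul_pow]; simp
    rw [← s]
    generalize poch (b + 1 / 2) (n + j + n) = P1 at *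
    generalize poch ((b + 3 / 2) / 2) n = P2 at *
    generalize poch ((b + 3 / 2) / 2 + n) j = P3 at *
    field_simp
  rw [Finset.sum_congr rfl key, ← Finset.mul_sum, hS]
  have h2 := poch_two_mul ((b + 1 / 2) / 2) k
  rw [show 2 * ((b + 1 / 2) / 2) = b + 1 / 2 by ring,
    show (b + 1 / 2) / 2 + 1 / 2 = (b + 3 / 2) / 2 by ring] at h2
  rw [h2, show (-4 : ℝ) = (-1) * 4 by norm_num, mul_pow]
  have p4 : 0 < poch ((b + 1 / 2) / 2) k := poch_pos (by positivity) k
  have p5 := poch_pos hb k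
  have q4 : a + k ≠ 0 := by positivity
  generalize poch ((b + 1 / 2) / 2) k = P1 at *
  generalize poch ((b + 3 / 2) / 2) k = P2 at *
  field_simp

theorem summable_E {q : ℝ} (hq : 0 < q) (y : ℝ) :
    Summable fun i : ℕ => y ^ i / (i.factorial * poch q i) := by
  have h := Real.summable_pow_div_factorial (|y| / q)
  refine Summable.of_norm_bounded h fun i => ?_
  have := pow_le_poch hq i
  have h3 := poch_pos hq i
  rw [Real.norm_eq_abs, abs_div, abs_pow, abs_of_pos (by positivity : 0 < i.factorial * poch q i),
    div_pow, div_div, mul_comm (q ^ i)]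
  gcongr

/-- Normalized Bessel function. -/
noncomputable def EE (q y : ℝ) : ℝ := ∑' i : ℕ, (-y) ^ i / (i.factorial * poch q i)

theorem sq_coef_nonneg {q : ℝ} (hq : 1 / 2 < q) (j : ℕ) : 0 ≤ sq_coef q j := by
  have h1 : 0 < 2 * q - 1 + j := by
    have : (0:ℝ) ≤ j := j.cast_nonneg
    linarith
  have := poch_pos h1 j
  unfold sq_coef
  positivity

theorem cauchy {q : ℝ} (hq : 0 < q) (y : ℝ) (k : ℕ) :
    ∑ x ∈ Finset.HasAntidiagonal.antidiagonal k,
      (y ^ x.1 / (x.1.factorial * poch q x.1)) * (y ^ x.2 / (x.2.factorial * poch q x.2)) =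
    y ^ k * sq_coef q k := by
  unfold sq_coef
  rw [← vander hq, Finset.mul_sum]
  refine Finset.sum_congr rfl fun x hx => ?_
  rw [← (Finset.HasAntidiagonal.mem_antidiagonal.1 hx), pow_add]
  ring

theorem hasSum_sq {q : ℝ} (hq : 0 < q) (y : ℝ) :
    HasSum (fun k => y ^ k * sq_coef q k) ((∑' i : ℕ, y ^ i / (i.factorial * poch q i)) ^ 2) := by
  have h := (summable_E hq y).norm
  have s := summable_norm_sum_mul_antidiagonal_of_summable_norm h h
  have t := tsum_mul_tsum_eq_tsum_sum_antidiagonal_of_summable_norm h h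
  simp only [cauchy hq] at s t
  rw [sq, t]
  exact s.of_norm.hasSum

theorem WW_nonneg {p : ℝ} (hp : 0 < p) (n : ℕ) : 0 < WW p n := by
  cases n with
  | zero => simp [WW]
  | succ n =>
    have := poch_pos hp n
    simp only [WW, YY]
    positivity

theorem cc_nonneg (ha : 0 < a) (h1 : 3 * a ≤ 2 * b) (h2 : 2 * a ≤ b + 1 / 2) (n : ℕ) :
    0 ≤ cc a b n := by
  have := (RE_nonneg ha h1 h2 n).1
  have := WW_nonneg (p := b + 1 / 2) (by linarith) n
  unfold cc
  positivity

theorem cc_pos (ha : 0 < a) (h1 : 3 * a ≤ 2 * b) (h2 : 2 * a ≤ b + 1 / 2)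
    (hne : ¬ (a = 1 ∧ b = 3 / 2)) (n : ℕ) : 0 < cc a b (n + 2) := by
  have := RE_pos ha h1 h2 hne n
  have := WW_nonneg (p := b + 1 / 2) (by linarith) (n + 2)
  have := poch_pos (q := (b + 3 / 2) / 2) (by linarith) (n + 2)
  unfold cc
  positivity

theorem summable_WW {p q : ℝ} (hp : 0 < p) (hq : 0 < q) (y : ℝ) (hy : 0 < y) :
    Summable fun n : ℕ => WW p n / poch q n ^ 2 * y ^ n := by
  have key : Summable fun n : ℕ => YY p n / poch q n ^ 2 * y ^ n := by
    have pos : ∀ n, 0 < YY p n / poch q n ^ 2 * y ^ n := fun n => by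
      have := poch_pos hp n
      have := poch_pos hq n
      unfold YY; positivity
    refine summable_of_ratio_test_tendsto_lt_one (l := 0) (by norm_num)
      (Filter.Eventually.of_forall fun n => (pos n).ne') ?_
    have e : ∀ n : ℕ, ‖YY p (n + 1) / poch q (n + 1) ^ 2 * y ^ (n + 1)‖ /
        ‖YY p n / poch q n ^ 2 * y ^ n‖ = (p + n) / (n + 1) * y / (q + n) ^ 2 := by
      intro n
      rw [Real.norm_of_nonneg (pos _).le, Real.norm_of_nonneg (pos _).le, YY_succ, poch_succ]
      have h1 := poch_pos hp n
      have h2 := poch_pos hq n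
      have h3 : 0 < YY p n := by unfold YY; positivity
      have : q + n ≠ 0 := by positivity
      rw [pow_succ y]
      field_simp
    simp only [e]
    refine squeeze_zero (g := fun n : ℕ => (p + 1) * y / q * (1 / (n + q)))
      (fun n => by positivity) (fun n => ?_) ?_
    · have hn : (0:ℝ) ≤ n := n.cast_nonneg
      have : (p + n) / (n + 1) ≤ p + 1 := by
        rw [div_le_iff₀ (by positivity)]
        nlinarith
      calc (p + n) / (n + 1) * y / (q + n) ^ 2 ≤ (p + 1) * y / (q * (q + n)) := by
            gcongr
            nlinarith
        _ = _ := by rw [add_comm (n:ℝ) q]; field_simp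
    · have : Filter.Tendsto (fun n : ℕ => 1 / ((n:ℝ) + q)) Filter.atTop (nhds 0) := by
        simp only [one_div]
        exact tendsto_inv_atTop_zero.comp
          (Filter.tendsto_atTop_add_const_right _ _ tendsto_natCast_atTop_atTop)
      simpa using this.const_mul ((p + 1) * y / q)
  rw [← summable_nat_add_iff 1]
  refine Summable.of_nonneg_of_le (fun n => ?_) (fun n => ?_) (key.mul_left ((2 + p) * y / q ^ 2))
  · have := WW_nonneg hp (n + 1)
    have := poch_pos hq (n + 1)
    positivity
  · have h1 := poch_pos hp n
    have h2 := poch_pos hq n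
    have h3 : 0 < YY p n := by unfold YY; positivity
    have hn : (0:ℝ) ≤ n := n.cast_nonneg
    have e1 : WW p (n + 1) ≤ (2 + p) * YY p n := by
      simp only [WW]
      rw [div_le_iff₀ (by positivity)]
      have : 2 * n + 1 + p ≤ (2 + p) * (n + 1) := by nlinarith
      nlinarith
    have e2 : q ^ 2 * poch q n ^ 2 ≤ poch q (n + 1) ^ 2 := by
      rw [poch_succ, ← mul_pow, mul_comm]
      gcongr
      linarith
    calc WW p (n + 1) / poch q (n + 1) ^ 2 * y ^ (n + 1)
        ≤ ((2 + p) * YY p n) / (q ^ 2 * poch q n ^ 2) * y ^ (n + 1) := by gcongr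
      _ = _ := by rw [pow_succ y]; field_simp

theorem summable_cc (ha : 0 < a) (h1 : 3 * a ≤ 2 * b) (h2 : 2 * a ≤ b + 1 / 2) (y : ℝ)
    (hy : 0 < y) : Summable fun n : ℕ => cc a b n * y ^ n := by
  have hb : 0 < b := by linarith
  have h := (summable_WW (p := b + 1 / 2) (q := (b + 3 / 2) / 2) (by linarith) (by linarith)
    (4 * y) (by positivity)).mul_left (1 + (RE a b 0).2)
  refine Summable.of_nonneg_of_le (fun n => ?_) (fun n => ?_) h
  · have := cc_nonneg ha h1 h2 n
    positivity
  · have e1 := RE_bound ha h1 h2 n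
    have e2 := RE_nonneg ha h1 h2 n
    have e3 := WW_nonneg (p := b + 1 / 2) (by linarith) n
    have e4 : (RE a b n).1 ≤ 4 ^ n * (1 + (RE a b 0).2) := by linarith
    unfold cc
    calc WW (b + 1 / 2) n * (RE a b n).1 / poch ((b + 3 / 2) / 2) n ^ 2 * y ^ n ≤
        WW (b + 1 / 2) n * (4 ^ n * (1 + (RE a b 0).2)) / poch ((b + 3 / 2) / 2) n ^ 2 * y ^ n := by
          gcongr
      _ = _ := by rw [mul_pow]; ring

theorem expansion (ha : 0 < a) (h1 : 3 * a ≤ 2 * b) (h2 : 2 * a ≤ b + 1 / 2) (y : ℝ)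
    (hy : 0 < y) : HasSum (fun n : ℕ => cc a b n * y ^ n * EE ((b + 3 / 2) / 2 + n) y ^ 2)
      (∑' k : ℕ, (-4 * y) ^ k * (a / (k.factorial * poch b k * (a + k)))) := by
  have hb : 0 < b := by linarith
  have hq : 1 / 2 < (b + 3 / 2) / 2 := by linarith
  have hqn : ∀ n : ℕ, 1 / 2 < (b + 3 / 2) / 2 + n := fun n => by
    have hn : (0:ℝ) ≤ n := n.cast_nonneg
    linarith
  set q := (b + 3 / 2) / 2 with hqdef
  let f : ℕ × ℕ → ℝ := fun x => cc a b x.1 * y ^ x.1 * ((-y) ^ x.2 * sq_coef (q + x.1) x.2)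
  have inner : ∀ n, HasSum (fun j => f (n, j)) (cc a b n * y ^ n * EE (q + n) y ^ 2) := fun n =>
    (hasSum_sq (q := q + n) (by linarith [hqn n]) (-y)).mul_left _
  have nrm : ∀ x, ‖f x‖ = cc a b x.1 * y ^ x.1 * (y ^ x.2 * sq_coef (q + x.1) x.2) := by
    intro x
    have e1 := cc_nonneg ha h1 h2 x.1
    have e2 := sq_coef_nonneg (hqn x.1) x.2
    simp only [f, norm_mul, norm_pow, norm_neg]
    rw [Real.norm_of_nonneg e1, Real.norm_of_nonneg e2, Real.norm_of_nonneg hy.le]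
  have inner2 : ∀ n : ℕ, HasSum (fun j => ‖f (n, j)‖)
      (cc a b n * y ^ n * (∑' i : ℕ, y ^ i / (i.factorial * poch (q + n) i)) ^ 2) := fun n => by
    simp only [nrm]
    exact (hasSum_sq (q := q + n) (by linarith [hqn n]) y).mul_left _
  have sumf : Summable f := by
    apply Summable.of_norm
    rw [summable_prod_of_nonneg (fun x => norm_nonneg _)]
    refine ⟨fun n => (inner2 n).summable, ?_⟩
    simp only [fun n => (inner2 n).tsum_eq]
    refine Summable.of_nonneg_of_le (fun n => ?_) (fun n => ?_) ((summable_cc ha h1 h2 y hy).mul_right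
      ((∑' i : ℕ, y ^ i / (i.factorial * poch q i)) ^ 2))
    · have e1 := cc_nonneg ha h1 h2 n
      positivity
    · have e1 := cc_nonneg ha h1 h2 n
      have pp : ∀ i : ℕ, 0 < poch (q + n) i := fun i => poch_pos (by linarith [hqn n]) i
      have hle : ∑' i : ℕ, y ^ i / (i.factorial * poch (q + n) i) ≤
          ∑' i : ℕ, y ^ i / (i.factorial * poch q i) := by
        refine Summable.tsum_le_tsum (fun i => ?_) (summable_E (by linarith [hqn n]) y)
          (summable_E (by linarith) y)
        have := poch_mono (q := q) (r := q + n) (by linarith) (by simp) i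
        have := poch_pos (q := q) (by linarith) i
        gcongr
      have h0 : 0 ≤ ∑' i : ℕ, y ^ i / (i.factorial * poch (q + n) i) :=
        tsum_nonneg fun i => by have := pp i; positivity
      gcongr
  have s1 := sumf.hasSum.prod_fiberwise inner
  have s2 : HasSum (fun x : (Σ k : ℕ, Finset.HasAntidiagonal.antidiagonal k) =>
      f (Finset.HasAntidiagonal.sigmaAntidiagonalEquivProd x)) (∑' x, f x) :=
    (Finset.HasAntidiagonal.sigmaAntidiagonalEquivProd.hasSum_iff).2 sumf.hasSum
  have s3 := s2.sigma (g := fun k => (-4 * y) ^ k * (a / (k.factorial * poch b k * (a + k)))) (by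
    intro k
    have e : (-4 * y) ^ k * (a / (k.factorial * poch b k * (a + k))) =
        ∑ x ∈ Finset.HasAntidiagonal.antidiagonal k, f x := by
      rw [mul_pow, mul_right_comm, ← coef_identity ha hb k, Finset.sum_mul]
      refine Finset.sum_congr rfl fun x hx => ?_
      rw [← (Finset.HasAntidiagonal.mem_antidiagonal.1 hx), pow_add]
      simp only [f]
      rw [neg_pow y]
      ring
    rw [e, ← Finset.sum_coe_sort]
    exact hasSum_fintype _)
  rw [s3.tsum_eq]
  exact s1

theorem EE_ne_zero {q y : ℝ} (hq : 0 < q) (hy : 0 < y) (h : 2 * y ≤ q) : EE q y ≠ 0 := by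
  have s := summable_E hq (-y)
  have hs := Real.summable_pow_div_factorial (1 / 2)
  have e : EE q y = 1 + ∑' i : ℕ, (-y) ^ (i + 1) / ((i + 1).factorial * poch q (i + 1)) := by
    unfold EE
    rw [s.tsum_eq_zero_add]
    simp [poch_zero]
  have e2 : Real.exp (1 / 2) = 1 + ∑' i : ℕ, (1 / 2 : ℝ) ^ (i + 1) / ((i + 1).factorial) := by
    rw [Real.exp_eq_exp_ℝ, NormedSpace.exp_eq_tsum_div]
    beta_reduce
    rw [hs.tsum_eq_zero_add]
    simp
  have e3 : ‖∑' i : ℕ, (-y) ^ (i + 1) / ((i + 1).factorial * poch q (i + 1))‖ ≤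
      ∑' i : ℕ, (1 / 2 : ℝ) ^ (i + 1) / ((i + 1).factorial) := by
    refine tsum_of_norm_bounded ((summable_nat_add_iff 1).2 hs).hasSum fun i => ?_
    have t1 := pow_le_poch hq (i + 1)
    have t2 := poch_pos hq (i + 1)
    rw [norm_div, norm_pow, norm_neg, Real.norm_of_nonneg hy.le, Real.norm_of_nonneg (by positivity),
      mul_comm, ← div_div]
    gcongr
    rw [div_le_iff₀ t2]
    calc y ^ (i + 1) ≤ (1 / 2 * q) ^ (i + 1) := by gcongr; linarith
      _ = (1 / 2) ^ (i + 1) * q ^ (i + 1) := mul_pow _ _ _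
      _ ≤ _ := by gcongr
  have e4 : Real.exp (1 / 2) < 2 := by
    have := Real.exp_one_lt_d9
    have h2 : Real.exp (1 / 2) ^ 2 = Real.exp 1 := by rw [← Real.exp_nat_mul]; norm_num
    by_contra hc
    push Not at hc
    nlinarith
  intro h0
  rw [h0] at e
  have := neg_le_abs (∑' i : ℕ, (-y) ^ (i + 1) / ((i + 1).factorial * poch q (i + 1)))
  rw [Real.norm_eq_abs] at e3
  linarith

theorem psi_nonneg (ha : 0 < a) (h1 : 3 * a ≤ 2 * b) (h2 : 2 * a ≤ b + 1 / 2) (y : ℝ)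
    (hy : 0 < y) : 0 ≤ ∑' k : ℕ, (-4 * y) ^ k * (a / (k.factorial * poch b k * (a + k))) :=
  (expansion ha h1 h2 y hy).nonneg fun n => by
    have := cc_nonneg ha h1 h2 n
    positivity

theorem psi_pos (ha : 0 < a) (h1 : 3 * a ≤ 2 * b) (h2 : 2 * a ≤ b + 1 / 2)
    (hne : ¬ (a = 1 ∧ b = 3 / 2)) (y : ℝ)
    (hy : 0 < y) : 0 < ∑' k : ℕ, (-4 * y) ^ k * (a / (k.factorial * poch b k * (a + k))) := by
  have h := expansion ha h1 h2 y hy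
  obtain ⟨N, hN⟩ := exists_nat_ge (2 * y)
  have nn : ∀ n : ℕ, 0 ≤ cc a b n * y ^ n * EE ((b + 3 / 2) / 2 + n) y ^ 2 := fun n => by
    have := cc_nonneg ha h1 h2 n
    positivity
  have hE : EE ((b + 3 / 2) / 2 + (N + 2 : ℕ)) y ≠ 0 := by
    push_cast
    have : (0:ℝ) ≤ N := N.cast_nonneg
    exact EE_ne_zero (by linarith) hy (by linarith)
  have hc := cc_pos ha h1 h2 hne N
  have := le_hasSum h (N + 2) (fun n _ => nn n)
  refine lt_of_lt_of_le ?_ this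
  positivity

end T

theorem bessel_term (α β t : ℝ) (hα : -1 < α) (ht : 0 < t) (k : ℕ) :
    t ^ (-β) * ((-1 : ℝ) ^ k / ((k.factorial : ℝ) * Real.Gamma (α + k + 1)) *
      (t / 2) ^ (2 * (k : ℝ) + α)) =
    1 / (Real.Gamma (α + 1) * 2 ^ α) * t ^ (α - β) *
      ((-(t ^ 2 / 4)) ^ k / (k.factorial * poch (α + 1) k)) := by
  have hb : 0 < α + 1 := by linarith
  have hG := Real.Gamma_pos_of_pos hb
  have hP := poch_pos hb k
  rw [show α + k + 1 = α + 1 + k by ring, Gamma_poch hb, Real.rpow_add (by positivity),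
    Real.div_rpow ht.le (by norm_num) α, show (2 * (k:ℝ)) = ((2 * k : ℕ) : ℝ) by push_cast; ring,
    Real.rpow_natCast, sub_eq_add_neg, Real.rpow_add ht, pow_mul, neg_pow (t ^ 2 / 4),
    show (t / 2) ^ 2 = t ^ 2 / 4 by ring]
  have : (0:ℝ) < 2 ^ α := by positivity
  field_simp

theorem bessel_integral (α β x : ℝ) (hα : -1 < α) (hβ : β < α + 1) (hx : 0 < x) :
    ∫ t in (0 : ℝ)..x, t ^ (-β) * besselJ α t =
    1 / (Real.Gamma (α + 1) * 2 ^ α) * x ^ (α - β + 1) / (α - β + 1) *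
    ∑' k : ℕ, (-4 * (x ^ 2 / 16)) ^ k *
      (((α - β + 1) / 2) / (k.factorial * poch (α + 1) k * ((α - β + 1) / 2 + k))) := by
  have hb : 0 < α + 1 := by linarith
  have hG := Real.Gamma_pos_of_pos hb
  have h2 : (0:ℝ) < 2 ^ α := by positivity
  set κ := 1 / (Real.Gamma (α + 1) * 2 ^ α) with hκ
  have hκ0 : 0 < κ := by positivity
  have hs := summable_E hb (x ^ 2 / 4)
  have hii : IntervalIntegrable (fun t : ℝ => t ^ (α - β)) MeasureTheory.volume 0 x :=
    intervalIntegral.intervalIntegrable_rpow' (by linarith)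
  have H := intervalIntegral.hasSum_integral_of_dominated_convergence
    (μ := MeasureTheory.volume) (a := (0:ℝ)) (b := x)
    (F := fun (k : ℕ) (t : ℝ) => κ * t ^ (α - β) *
      ((-(t ^ 2 / 4)) ^ k / (k.factorial * poch (α + 1) k)))
    (f := fun t => t ^ (-β) * besselJ α t)
    (fun (k : ℕ) (t : ℝ) => κ * t ^ (α - β) * ((x ^ 2 / 4) ^ k / (k.factorial * poch (α + 1) k)))
    (fun k => by
      apply Measurable.aestronglyMeasurable
      fun_prop)
    (fun k => Filter.Eventually.of_forall fun t ht => by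
      rw [Set.uIoc_of_le hx.le] at ht
      have ht0 : 0 < t := ht.1
      have hP := poch_pos hb k
      rw [norm_mul, norm_div, norm_pow, norm_neg, Real.norm_of_nonneg (by positivity),
        Real.norm_of_nonneg (by positivity), Real.norm_of_nonneg (by positivity)]
      have : t ≤ x := ht.2
      gcongr)
    (Filter.Eventually.of_forall fun t _ => hs.mul_left _)
    (by
      simp only [tsum_mul_left]
      exact (hii.const_mul κ).mul_const _)
    (Filter.Eventually.of_forall fun t ht => by
      rw [Set.uIoc_of_le hx.le] at ht
      have ht0 : 0 < t := ht.1
      have e := (summable_E hb (-(t ^ 2 / 4))).hasSum.mul_left (κ * t ^ (α - β))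
      have e2 := e.tsum_eq
      simp only [hκ, ← bessel_term α β t hα ht0] at e e2
      rw [← e2, tsum_mul_left] at e
      simp only [hκ, ← bessel_term α β t hα ht0]
      exact e)
  rw [← H.tsum_eq, ← tsum_mul_left]
  congr 1
  funext k
  have e1 : ∫ t in (0:ℝ)..x, κ * t ^ (α - β) *
      ((-(t ^ 2 / 4)) ^ k / (k.factorial * poch (α + 1) k)) =
      ∫ t in (0:ℝ)..x, (κ * (-1 / 4) ^ k / (k.factorial * poch (α + 1) k)) *
        t ^ (α - β + (2 * k : ℕ)) := by
    refine intervalIntegral.integral_congr_ae (Filter.Eventually.of_forall fun t ht => ?_)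
    rw [Set.uIoc_of_le hx.le] at ht
    have ht0 : 0 < t := ht.1
    rw [Real.rpow_add ht0, Real.rpow_natCast, pow_mul, show -(t ^ 2 / 4) = (-1 / 4) * t ^ 2 by ring,
      mul_pow]
    ring
  have hk : (0:ℝ) ≤ k := k.cast_nonneg
  have hP := poch_pos hb k
  rw [e1, intervalIntegral.integral_const_mul, integral_rpow (Or.inl (by push_cast; linarith)),
    Real.zero_rpow (by push_cast; linarith), add_right_comm, Real.rpow_add hx, Real.rpow_natCast,
    pow_mul, show -4 * (x ^ 2 / 16) = (-1 / 4) * x ^ 2 by ring, mul_pow]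
  have q1 : α - β + 1 ≠ 0 := by linarith
  have q2 : α - β + 1 + 2 * k ≠ 0 := by linarith
  have q3 : (α - β + 1) / 2 + k ≠ 0 := by linarith
  push_cast
  have q4 : (α - β + 1) / 2 + k = (α - β + 1 + 2 * k) / 2 := by ring
  rw [q4]
  generalize x ^ (α - β + 1) = X
  generalize α - β + 1 = A at *
  field_simp
  ring

theorem stmt9 (α β : ℝ) (hα : -1 < α)
    (hβ₁ : max (-1 / 2) (-(α + 1) / 3) ≤ β) (hβ₂ : β < α + 1) :
    (∀ x : ℝ, 0 < x → 0 ≤ ∫ t in (0 : ℝ)..x, t ^ (-β) * besselJ α t) ∧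
      ((α, β) ≠ (1 / 2, -1 / 2) →
        ∀ x : ℝ, 0 < x → 0 < ∫ t in (0 : ℝ)..x, t ^ (-β) * besselJ α t) := by
  have g1 : -1 / 2 ≤ β := le_trans (le_max_left _ _) hβ₁
  have g2 : -(α + 1) / 3 ≤ β := le_trans (le_max_right _ _) hβ₁
  have hb : 0 < α + 1 := by linarith
  have hG := Real.Gamma_pos_of_pos hb
  have ha : 0 < α - β + 1 := by linarith
  refine ⟨fun x hx => ?_, fun hne x hx => ?_⟩
  · rw [bessel_integral α β x hα hβ₂ hx]
    exact mul_nonneg (by positivity)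
      (psi_nonneg (by linarith) (by linarith) (by linarith) _ (by positivity))
  · rw [bessel_integral α β x hα hβ₂ hx]
    refine mul_pos (by positivity)
      (psi_pos (by linarith) (by linarith) (by linarith) ?_ _ (by positivity))
    rintro ⟨c1, c2⟩
    apply hne
    rw [Prod.mk.injEq]
    exact ⟨by linarith, by linarith⟩
end
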